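/- Let F be a formal group law over a commutative ring R, with formal inverse [-1]y and associated power series q(x,y). Then [-1]y = −y·q(0,y) and F(x,y) = (x − [-1]y)·q(x, [-1]y). Consequently, the coefficients of q(x,y) generate the same subring of R as the coefficients of F(x,y). -/

import Mathlib

noncomputable section
open MvPowerSeries

variable {k : Type*} [CommRing k]

/-- Substitution of a family of power series (each with zero constant term) into a
multivariate power series, via the standard coefficient formula. -/
def psSubst {σ τ : Type*} [Fintype σ] [DecidableEq σ]
    (a : σ → MvPowerSeries τ k) (f : MvPowerSeries σ k) : MvPowerSeries τ k :=
  fun e => ∑ d ∈ Finset.Iic (Finsupp.equivFunOnFinite.symm fun _ : σ => e.sum fun _ m => m),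
    (MvPowerSeries.coeff d f) * MvPowerSeries.coeff e (∏ i, a i ^ d i)

/-- The automorphism of `k⟦x,y⟧` exchanging the two variables. -/
def swapPS (f : MvPowerSeries (Fin 2) k) : MvPowerSeries (Fin 2) k :=
  fun d => MvPowerSeries.coeff (Finsupp.equivMapDomain (Equiv.swap 0 1) d) f

/-- A formal group law over `k`. -/
def IsFormalGroupLaw (F : MvPowerSeries (Fin 2) k) : Prop :=
  swapPS F = F ∧
  psSubst ![X 0, 0] F = (X 0 : MvPowerSeries (Fin 2) k) ∧
  psSubst ![0, X 1] F = (X 1 : MvPowerSeries (Fin 2) k) ∧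
  psSubst ![psSubst ![(X 0 : MvPowerSeries (Fin 3) k), X 1] F, X 2] F =
    psSubst ![(X 0 : MvPowerSeries (Fin 3) k), psSubst ![(X 1 : MvPowerSeries (Fin 3) k), X 2] F] F

/-- The formal difference `x [-1] y = F(x, ι(y)) ∈ k⟦x,y⟧`, where `ι` is the formal inverse. -/
def formalDiff (F : MvPowerSeries (Fin 2) k) (ι : PowerSeries k) : MvPowerSeries (Fin 2) k :=
  psSubst ![X 0, psSubst (fun _ : Unit => (X 1 : MvPowerSeries (Fin 2) k)) ι] F

/-!
At points `u`, `v` of the formal group the definition of `q` reads `F(u, [-1]v) = (u - v) q(u, v)`.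
Taking `(u, v) = (0, y)` gives `[-1]y = -y q(0, y)`, and `(u, v) = (x, [-1]y)` gives the formula for
`F`, because `[-1]` is an involution. These two formulas express the coefficients of `F` through
those of `q`. Conversely, `F(x, y) = y + x G(x, y)` makes `F(x, [-1]x) = 0` the recursion
`[-1]x = -x G(x, [-1]x)` for the coefficients of `[-1]x`, and dividing `F(x, [-1]y)` by `x - y`
creates no new coefficients, as the change of variables `x ↦ x + y` turns `x - y` into `x`.
-/

theorem coeff_prod_pow_eq_zero_of_degree_lt {σ τ : Type*} [Fintype σ]
    {a : σ → MvPowerSeries τ k} (ha : ∀ i, constantCoeff (a i) = 0) {d : σ →₀ ℕ} {e : τ →₀ ℕ}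
    {i : σ} (hi : e.degree < d i) :
    coeff e (∏ j, a j ^ d j) = 0 := by
  refine coeff_of_lt_order (lt_of_lt_of_le ?_ (le_order_prod _ _))
  calc (e.degree : ℕ∞) < d i := mod_cast hi
    _ ≤ (a i ^ d i).order := le_order_pow_of_constantCoeff_eq_zero _ (ha i)
    _ ≤ ∑ j, (a j ^ d j).order :=
      Finset.single_le_sum (f := fun j => (a j ^ d j).order) (fun _ _ => zero_le)
        (Finset.mem_univ i)

section Substitution

variable {σ τ υ : Type*} [Fintype σ] [DecidableEq σ]

theorem coeff_psSubst (a : σ → MvPowerSeries τ k) (f : MvPowerSeries σ k) (e : τ →₀ ℕ) :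
    coeff e (psSubst a f) =
      ∑ d ∈ Finset.Iic (Finsupp.equivFunOnFinite.symm fun _ : σ => e.degree),
        coeff d f * coeff e (∏ i, a i ^ d i) :=
  rfl

theorem psSubst_eq_subst {a : σ → MvPowerSeries τ k} (ha : ∀ i, constantCoeff (a i) = 0)
    (f : MvPowerSeries σ k) : psSubst a f = subst a f := by
  ext e
  have hprod (d : σ →₀ ℕ) : d.prod (fun i n => a i ^ n) = ∏ i, a i ^ d i :=
    Finsupp.prod_fintype _ _ fun _ => pow_zero _
  simp only [coeff_subst (hasSubst_of_constantCoeff_zero ha), hprod, smul_eq_mul, coeff_psSubst]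
  refine (finsum_eq_sum_of_support_subset _ fun d hd => ?_).symm
  rw [Finset.coe_Iic, Set.mem_Iic]
  intro i
  by_contra! hi
  exact hd (by simp only [coeff_prod_pow_eq_zero_of_degree_lt ha hi, mul_zero])

theorem constantCoeff_psSubst_eq_zero {a : σ → MvPowerSeries τ k}
    (ha : ∀ i, constantCoeff (a i) = 0) {f : MvPowerSeries σ k} (hf : constantCoeff f = 0) :
    constantCoeff (psSubst a f) = 0 := by
  rw [psSubst_eq_subst ha]
  exact constantCoeff_subst_eq_zero (hasSubst_of_constantCoeff_zero ha) ha hf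

theorem psSubst_psSubst [Fintype τ] [DecidableEq τ] {a : σ → MvPowerSeries τ k}
    (ha : ∀ i, constantCoeff (a i) = 0) {b : τ → MvPowerSeries υ k}
    (hb : ∀ j, constantCoeff (b j) = 0) (f : MvPowerSeries σ k) :
    psSubst b (psSubst a f) = psSubst (fun i => psSubst b (a i)) f := by
  rw [psSubst_eq_subst fun i => constantCoeff_psSubst_eq_zero hb (ha i)]
  simp only [psSubst_eq_subst ha, psSubst_eq_subst hb]
  exact subst_comp_subst_apply (hasSubst_of_constantCoeff_zero ha)
    (hasSubst_of_constantCoeff_zero hb) f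

theorem psSubst_X {a : σ → MvPowerSeries τ k} (ha : ∀ i, constantCoeff (a i) = 0) (i : σ) :
    psSubst a (X i) = a i := by
  rw [psSubst_eq_subst ha, subst_X (hasSubst_of_constantCoeff_zero ha)]

theorem psSubst_X_self (f : MvPowerSeries σ k) : psSubst X f = f := by
  rw [psSubst_eq_subst constantCoeff_X, subst_self, id]

theorem psSubst_zero (a : σ → MvPowerSeries τ k) : psSubst a (0 : MvPowerSeries σ k) = 0 := by
  ext e
  simp [coeff_psSubst]

theorem psSubst_add {a : σ → MvPowerSeries τ k} (ha : ∀ i, constantCoeff (a i) = 0)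
    (f g : MvPowerSeries σ k) : psSubst a (f + g) = psSubst a f + psSubst a g := by
  simp only [psSubst_eq_subst ha, subst_add (hasSubst_of_constantCoeff_zero ha)]

theorem psSubst_sub {a : σ → MvPowerSeries τ k} (ha : ∀ i, constantCoeff (a i) = 0)
    (f g : MvPowerSeries σ k) : psSubst a (f - g) = psSubst a f - psSubst a g := by
  simp only [psSubst_eq_subst ha, subst_sub (hasSubst_of_constantCoeff_zero ha)]

theorem psSubst_mul {a : σ → MvPowerSeries τ k} (ha : ∀ i, constantCoeff (a i) = 0)
    (f g : MvPowerSeries σ k) : psSubst a (f * g) = psSubst a f * psSubst a g := by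
  simp only [psSubst_eq_subst ha, subst_mul (hasSubst_of_constantCoeff_zero ha)]

end Substitution

section BinarySubstitution

variable {τ υ : Type*}

theorem constantCoeff_pair_eq_zero {u v : MvPowerSeries τ k} (hu : constantCoeff u = 0)
    (hv : constantCoeff v = 0) (i : Fin 2) : constantCoeff (![u, v] i) = 0 := by
  revert i
  exact Fin.forall_fin_two.2 ⟨hu, hv⟩

theorem psSubst_psSubst_pair [Fintype τ] [DecidableEq τ] {u v : MvPowerSeries τ k}
    (hu : constantCoeff u = 0) (hv : constantCoeff v = 0) {b : τ → MvPowerSeries υ k}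
    (hb : ∀ j, constantCoeff (b j) = 0) (f : MvPowerSeries (Fin 2) k) :
    psSubst b (psSubst ![u, v] f) = psSubst ![psSubst b u, psSubst b v] f := by
  rw [psSubst_psSubst (constantCoeff_pair_eq_zero hu hv) hb]
  congr 1
  ext i : 1
  fin_cases i <;> rfl

theorem psSubst_X_zero_X_one (f : MvPowerSeries (Fin 2) k) : psSubst ![X 0, X 1] f = f := by
  have hX : (![X 0, X 1] : Fin 2 → MvPowerSeries (Fin 2) k) = X := by
    ext i : 1
    fin_cases i <;> rfl
  rw [hX, psSubst_X_self]

theorem coeff_psSubst_zero_X_one (f : MvPowerSeries (Fin 2) k) {d : Fin 2 →₀ ℕ} (hd : d 0 = 0) :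
    coeff d (psSubst ![0, X 1] f) = coeff d f := by
  have hrescale : psSubst ![0, X 1] f = rescale ![0, 1] f := by
    rw [psSubst_eq_subst (constantCoeff_pair_eq_zero (map_zero _) (constantCoeff_X 1)),
      rescale_eq_subst]
    congr 1
    ext i : 1
    fin_cases i <;> simp
  rw [hrescale, coeff_rescale, Finsupp.prod_fintype _ _ fun _ => pow_zero _]
  simp [hd]

end BinarySubstitution

section CoefficientSubring

variable {σ τ : Type*}

/-- The power series whose coefficients at the exponents in `I` belong to the subring `S`. Taking
`I = ⊤` gives the power series over `S`; the lower sets `Iic d` serve for inductions on the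
exponent. -/
def coeffSubring (S : Subring k) (I : LowerSet (σ →₀ ℕ)) : Subring (MvPowerSeries σ k) where
  carrier := {f | ∀ d ∈ I, coeff d f ∈ S}
  zero_mem' _ _ := S.zero_mem
  one_mem' d _ := by
    classical
    rw [coeff_one]
    split_ifs
    exacts [S.one_mem, S.zero_mem]
  add_mem' hf hg d hd := S.add_mem (hf d hd) (hg d hd)
  neg_mem' hf d hd := S.neg_mem (hf d hd)
  mul_mem' hf hg d hd := by
    classical
    rw [coeff_mul]
    refine S.sum_mem fun p hp => ?_
    have hp : p.1 + p.2 = d := Finset.HasAntidiagonal.mem_antidiagonal.1 hp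
    exact S.mul_mem (hf _ (I.lower (hp ▸ le_self_add) hd)) (hg _ (I.lower (hp ▸ le_add_self) hd))

variable {S : Subring k} {I : LowerSet (σ →₀ ℕ)}

theorem mem_coeffSubring {f : MvPowerSeries σ k} :
    f ∈ coeffSubring S I ↔ ∀ d ∈ I, coeff d f ∈ S :=
  Iff.rfl

theorem mem_coeffSubring_top {f : MvPowerSeries σ k} :
    f ∈ coeffSubring S ⊤ ↔ ∀ d, coeff d f ∈ S := by
  simp only [mem_coeffSubring, LowerSet.mem_top, true_imp_iff]

theorem X_mem_coeffSubring (i : σ) : X i ∈ coeffSubring S I := by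
  classical
  intro d _
  rw [coeff_X]
  split_ifs
  exacts [S.one_mem, S.zero_mem]

theorem pair_mem_coeffSubring {u v : MvPowerSeries σ k} (hu : u ∈ coeffSubring S I)
    (hv : v ∈ coeffSubring S I) (i : Fin 2) : ![u, v] i ∈ coeffSubring S I := by
  revert i
  exact Fin.forall_fin_two.2 ⟨hu, hv⟩

theorem psSubst_mem_coeffSubring [Fintype τ] [DecidableEq τ] {a : τ → MvPowerSeries σ k}
    (ha : ∀ i, a i ∈ coeffSubring S I) {f : MvPowerSeries τ k} (hf : f ∈ coeffSubring S ⊤) :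
    psSubst a f ∈ coeffSubring S I := by
  intro e he
  rw [coeff_psSubst]
  exact S.sum_mem fun d _ => S.mul_mem (mem_coeffSubring_top.1 hf d)
    (Subring.prod_mem _ (fun i _ => Subring.pow_mem _ (ha i) _) e he)

theorem mem_coeffSubring_of_X_mul_mem {i : σ} {f : MvPowerSeries σ k}
    (hf : X i * f ∈ coeffSubring S ⊤) : f ∈ coeffSubring S ⊤ := by
  rw [mem_coeffSubring_top] at hf ⊢
  intro d
  have h := hf (Finsupp.single i 1 + d)
  rwa [X, coeff_add_monomial_mul, one_mul] at h

section Shear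

variable [DecidableEq σ] {i j : σ} {g : MvPowerSeries σ k}

/-- The family of power series describing the change of variables `X i ↦ X i + g`, which fixes the
other variables. -/
def shear (i : σ) (g : MvPowerSeries σ k) : σ → MvPowerSeries σ k :=
  Function.update X i (X i + g)

theorem shear_self (i : σ) (g : MvPowerSeries σ k) : shear i g i = X i + g :=
  Function.update_self ..

theorem shear_of_ne (hij : j ≠ i) (g : MvPowerSeries σ k) : shear i g j = X j :=
  Function.update_of_ne hij ..

theorem constantCoeff_shear (hg : constantCoeff g = 0) (l : σ) :
    constantCoeff (shear i g l) = 0 := by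
  rcases eq_or_ne l i with rfl | hl
  · rw [shear_self, map_add, constantCoeff_X, hg, add_zero]
  · rw [shear_of_ne hl, constantCoeff_X]

theorem shear_mem_coeffSubring (hg : g ∈ coeffSubring S I) (l : σ) :
    shear i g l ∈ coeffSubring S I := by
  rcases eq_or_ne l i with rfl | hl
  · exact shear_self l g ▸ Subring.add_mem _ (X_mem_coeffSubring l) hg
  · exact shear_of_ne hl g ▸ X_mem_coeffSubring l

variable [Fintype σ]

theorem psSubst_shear_neg_psSubst_shear (hij : i ≠ j) (f : MvPowerSeries σ k) :
    psSubst (shear i (-X j)) (psSubst (shear i (X j)) f) = f := by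
  have hpos := constantCoeff_shear (k := k) (i := i) (constantCoeff_X j)
  have hneg := constantCoeff_shear (k := k) (i := i) (g := -X j) (by simp)
  rw [psSubst_psSubst hpos hneg]
  convert psSubst_X_self f using 2
  ext l : 1
  rcases eq_or_ne l i with rfl | hl
  · rw [shear_self, psSubst_add hneg, psSubst_X hneg, psSubst_X hneg, shear_self,
      shear_of_ne hij.symm, neg_add_cancel_right]
  · rw [shear_of_ne hl, psSubst_X hneg, shear_of_ne hl]

theorem psSubst_shear_X_sub_X_mul (hij : i ≠ j) (f : MvPowerSeries σ k) :
    psSubst (shear i (X j)) ((X i - X j) * f) = X i * psSubst (shear i (X j)) f := by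
  have hpos := constantCoeff_shear (k := k) (i := i) (constantCoeff_X j)
  rw [psSubst_mul hpos, psSubst_sub hpos, psSubst_X hpos, psSubst_X hpos, shear_self,
    shear_of_ne hij.symm, add_sub_cancel_right]

end Shear

theorem mem_coeffSubring_of_X_sub_X_mul_mem [Finite σ] {i j : σ} (hij : i ≠ j)
    {f : MvPowerSeries σ k} (hf : (X i - X j) * f ∈ coeffSubring S ⊤) : f ∈ coeffSubring S ⊤ := by
  classical
  have := Fintype.ofFinite σ
  have hX : X j ∈ coeffSubring S ⊤ := X_mem_coeffSubring j
  have hshear : psSubst (shear i (X j)) f ∈ coeffSubring S ⊤ := by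
    apply mem_coeffSubring_of_X_mul_mem (i := i)
    rw [← psSubst_shear_X_sub_X_mul hij]
    exact psSubst_mem_coeffSubring (shear_mem_coeffSubring hX) hf
  rw [← psSubst_shear_neg_psSubst_shear hij f]
  exact psSubst_mem_coeffSubring (shear_mem_coeffSubring (Subring.neg_mem _ hX)) hshear

theorem mem_coeffSubring_of_eq_neg_X_mul_psSubst {G : MvPowerSeries (Fin 2) k}
    (hG : G ∈ coeffSubring S ⊤) {ι : PowerSeries k}
    (hι : ι = -(PowerSeries.X * psSubst ![PowerSeries.X, ι] G)) : ι ∈ coeffSubring S ⊤ := by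
  have hcoeff (n : ℕ) : PowerSeries.coeff n ι ∈ S := by
    induction n using Nat.strong_induction_on with
    | _ n ih =>
      cases n with
      | zero =>
        rw [hι, map_neg, PowerSeries.coeff_zero_X_mul, neg_zero]
        exact S.zero_mem
      | succ n =>
        have hιn : ι ∈ coeffSubring S (LowerSet.Iic (Finsupp.single () n)) := fun d hd => by
          have hdn : d () ≤ n := by simpa using LowerSet.mem_Iic_iff.1 hd ()
          rw [← PowerSeries.coeff_def rfl]
          exact ih (d ()) (Nat.lt_succ_of_le hdn)
        rw [hι, map_neg, PowerSeries.coeff_succ_X_mul]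
        exact S.neg_mem (psSubst_mem_coeffSubring
          (pair_mem_coeffSubring (X_mem_coeffSubring ()) hιn) hG _ (LowerSet.mem_Iic_iff.2 le_rfl))
  exact mem_coeffSubring_top.2 fun d => by
    rw [← PowerSeries.coeff_def rfl]
    exact hcoeff (d ())

theorem closure_range_coeff_eq {f g : MvPowerSeries σ k}
    (h : ∀ S : Subring k, f ∈ coeffSubring S ⊤ ↔ g ∈ coeffSubring S ⊤) :
    Subring.closure (Set.range fun d => coeff d f) =
      Subring.closure (Set.range fun d => coeff d g) := by
  refine eq_of_forall_ge_iff fun S => ?_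
  simpa only [Subring.closure_le, Set.range_subset_iff, SetLike.mem_coe,
    mem_coeffSubring_top] using h S

end CoefficientSubring

theorem psSubst_self_formalInverse {τ : Type*} {F : MvPowerSeries (Fin 2) k} {ι : PowerSeries k}
    (hι0 : PowerSeries.constantCoeff ι = 0) (hι : psSubst ![PowerSeries.X, ι] F = 0)
    {u : MvPowerSeries τ k} (hu : constantCoeff u = 0) :
    psSubst ![u, psSubst (fun _ : Unit => u) ι] F = 0 := by
  have h := congrArg (psSubst fun _ : Unit => u) hι
  rwa [psSubst_psSubst_pair PowerSeries.constantCoeff_X hι0 fun _ => hu, PowerSeries.X,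
    psSubst_X fun _ => hu, psSubst_zero] at h

theorem psSubst_formalInverse_eq_sub_mul {τ : Type*} {F : MvPowerSeries (Fin 2) k}
    {ι : PowerSeries k} (hι0 : PowerSeries.constantCoeff ι = 0)
    {q : MvPowerSeries (Fin 2) k} (hq : formalDiff F ι = (X 0 - X 1) * q)
    {u v : MvPowerSeries τ k} (hu : constantCoeff u = 0) (hv : constantCoeff v = 0) :
    psSubst ![u, psSubst (fun _ : Unit => v) ι] F = (u - v) * psSubst ![u, v] q := by
  have huv := constantCoeff_pair_eq_zero hu hv
  have hX1 : ∀ _ : Unit, constantCoeff (X 1 : MvPowerSeries (Fin 2) k) = 0 :=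
    fun _ => constantCoeff_X 1
  have h := congrArg (psSubst ![u, v]) hq
  rwa [formalDiff, psSubst_psSubst_pair (constantCoeff_X 0)
    (constantCoeff_psSubst_eq_zero hX1 hι0) huv, psSubst_psSubst hX1 huv, psSubst_mul huv,
    psSubst_sub huv, psSubst_X huv, psSubst_X huv] at h

/-- A one-dimensional formal group law `F`, not required to be commutative. -/
structure IsFormalGroup (F : MvPowerSeries (Fin 2) k) : Prop where
  psSubst_X_zero : psSubst ![X 0, 0] F = (X 0 : MvPowerSeries (Fin 2) k)
  psSubst_zero_X : psSubst ![0, X 1] F = (X 1 : MvPowerSeries (Fin 2) k)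
  assoc : psSubst ![psSubst ![(X 0 : MvPowerSeries (Fin 3) k), X 1] F, X 2] F =
    psSubst ![(X 0 : MvPowerSeries (Fin 3) k), psSubst ![(X 1 : MvPowerSeries (Fin 3) k), X 2] F] F

namespace IsFormalGroup

variable {F : MvPowerSeries (Fin 2) k} {τ : Type*} {u v w : MvPowerSeries τ k}

theorem constantCoeff_eq_zero (hF : IsFormalGroup F) : constantCoeff F = 0 := by
  rw [← coeff_zero_eq_constantCoeff_apply, ← coeff_psSubst_zero_X_one F rfl, hF.psSubst_zero_X,
    coeff_zero_X]

theorem psSubst_zero_right (hF : IsFormalGroup F) (hu : constantCoeff u = 0) :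
    psSubst ![u, 0] F = u := by
  have huu := constantCoeff_pair_eq_zero hu hu
  have h := congrArg (psSubst ![u, u]) hF.psSubst_X_zero
  rwa [psSubst_psSubst_pair (constantCoeff_X 0) (map_zero _) huu, psSubst_X huu, psSubst_zero] at h

theorem psSubst_zero_left (hF : IsFormalGroup F) (hu : constantCoeff u = 0) :
    psSubst ![0, u] F = u := by
  have huu := constantCoeff_pair_eq_zero hu hu
  have h := congrArg (psSubst ![u, u]) hF.psSubst_zero_X
  rwa [psSubst_psSubst_pair (map_zero _) (constantCoeff_X 1) huu, psSubst_X huu, psSubst_zero] at h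

theorem psSubst_assoc (hF : IsFormalGroup F) (hu : constantCoeff u = 0)
    (hv : constantCoeff v = 0) (hw : constantCoeff w = 0) :
    psSubst ![psSubst ![u, v] F, w] F = psSubst ![u, psSubst ![v, w] F] F := by
  have huvw : ∀ i, constantCoeff (![u, v, w] i) = 0 := by simp [Fin.forall_fin_succ, hu, hv, hw]
  have hX (i j : Fin 3) : constantCoeff (psSubst ![(X i : MvPowerSeries (Fin 3) k), X j] F) = 0 :=
    constantCoeff_psSubst_eq_zero
      (constantCoeff_pair_eq_zero (constantCoeff_X i) (constantCoeff_X j)) hF.constantCoeff_eq_zero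
  have h := congrArg (psSubst ![u, v, w]) hF.assoc
  rwa [psSubst_psSubst_pair (hX 0 1) (constantCoeff_X 2) huvw,
    psSubst_psSubst_pair (constantCoeff_X 0) (hX 1 2) huvw,
    psSubst_psSubst_pair (constantCoeff_X 0) (constantCoeff_X 1) huvw,
    psSubst_psSubst_pair (constantCoeff_X 1) (constantCoeff_X 2) huvw,
    psSubst_X huvw, psSubst_X huvw, psSubst_X huvw] at h

variable {ι : PowerSeries k}

theorem formalInverse_formalInverse (hF : IsFormalGroup F)
    (hι0 : PowerSeries.constantCoeff ι = 0) (hι : psSubst ![PowerSeries.X, ι] F = 0)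
    (hu : constantCoeff u = 0) :
    psSubst (fun _ : Unit => psSubst (fun _ : Unit => u) ι) ι = u := by
  set v := psSubst (fun _ : Unit => u) ι
  have hv : constantCoeff v = 0 := constantCoeff_psSubst_eq_zero (fun _ => hu) hι0
  set w := psSubst (fun _ : Unit => v) ι
  have hw : constantCoeff w = 0 := constantCoeff_psSubst_eq_zero (fun _ => hv) hι0
  calc w = psSubst ![0, w] F := (hF.psSubst_zero_left hw).symm
    _ = psSubst ![psSubst ![u, v] F, w] F := by rw [psSubst_self_formalInverse hι0 hι hu]
    _ = psSubst ![u, psSubst ![v, w] F] F := hF.psSubst_assoc hu hv hw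
    _ = psSubst ![u, 0] F := by rw [psSubst_self_formalInverse hι0 hι hv]
    _ = u := hF.psSubst_zero_right hu

theorem exists_eq_X_add_X_mul (hF : IsFormalGroup F) : ∃ G, F = X 1 + X 0 * G := by
  have hdvd : X 0 ∣ F - X 1 := X_dvd_iff.2 fun d hd => by
    rw [map_sub, ← hF.psSubst_zero_X, coeff_psSubst_zero_X_one F hd, sub_self]
  obtain ⟨G, hG⟩ := hdvd
  exact ⟨G, by rw [← hG, add_sub_cancel]⟩

theorem formalInverse_mem_coeffSubring (hF : IsFormalGroup F)
    (hι0 : PowerSeries.constantCoeff ι = 0) (hι : psSubst ![PowerSeries.X, ι] F = 0)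
    {S : Subring k} (hFS : F ∈ coeffSubring S ⊤) : ι ∈ coeffSubring S ⊤ := by
  obtain ⟨G, hG⟩ := hF.exists_eq_X_add_X_mul
  have hGS : G ∈ coeffSubring S ⊤ := mem_coeffSubring_of_X_mul_mem (i := 0) <| by
    rw [← sub_eq_of_eq_add' hG]
    exact Subring.sub_mem _ hFS (X_mem_coeffSubring 1)
  have hrec : ι = -(PowerSeries.X * psSubst ![PowerSeries.X, ι] G) := by
    have h0 := constantCoeff_pair_eq_zero PowerSeries.constantCoeff_X hι0
    rw [hG, psSubst_add h0, psSubst_mul h0, psSubst_X h0, psSubst_X h0] at hι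
    exact eq_neg_of_add_eq_zero_left hι
  exact mem_coeffSubring_of_eq_neg_X_mul_psSubst hGS hrec

end IsFormalGroup

theorem stmt2_general (F : MvPowerSeries (Fin 2) k) (hF : IsFormalGroup F)
    (ι : PowerSeries k) (hι0 : PowerSeries.constantCoeff ι = 0)
    (hι : psSubst ![PowerSeries.X, ι] F = 0)
    (q : MvPowerSeries (Fin 2) k)
    (hq : formalDiff F ι = ((X 0 : MvPowerSeries (Fin 2) k) - X 1) * q) :
    psSubst (fun _ : Unit => (X 1 : MvPowerSeries (Fin 2) k)) ι =
      -(X 1 : MvPowerSeries (Fin 2) k) * psSubst ![0, X 1] q ∧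
    F = ((X 0 : MvPowerSeries (Fin 2) k) -
          psSubst (fun _ : Unit => (X 1 : MvPowerSeries (Fin 2) k)) ι) *
        psSubst ![X 0, psSubst (fun _ : Unit => (X 1 : MvPowerSeries (Fin 2) k)) ι] q ∧
    Subring.closure (Set.range fun d : Fin 2 →₀ ℕ => coeff d q) =
      Subring.closure (Set.range fun d : Fin 2 →₀ ℕ => coeff d F) := by
  have hX1 : constantCoeff (X 1 : MvPowerSeries (Fin 2) k) = 0 := constantCoeff_X 1
  set J : MvPowerSeries (Fin 2) k := psSubst (fun _ : Unit => X 1) ι with hJ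
  have hJ0 : constantCoeff J = 0 := constantCoeff_psSubst_eq_zero (fun _ => hX1) hι0
  have hJq : J = -X 1 * psSubst ![0, X 1] q := by
    rw [← hF.psSubst_zero_left hJ0, hJ,
      psSubst_formalInverse_eq_sub_mul hι0 hq (map_zero _) hX1, zero_sub]
  have hFq : F = (X 0 - J) * psSubst ![X 0, J] q := by
    rw [← psSubst_formalInverse_eq_sub_mul hι0 hq (constantCoeff_X 0) hJ0,
      hF.formalInverse_formalInverse hι0 hι hX1, psSubst_X_zero_X_one]
  refine ⟨hJq, hFq, closure_range_coeff_eq fun S => ⟨fun hqS => ?_, fun hFS => ?_⟩⟩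
  · have hJS : J ∈ coeffSubring S ⊤ := hJq ▸ Subring.mul_mem _
      (Subring.neg_mem _ (X_mem_coeffSubring 1)) (psSubst_mem_coeffSubring
        (pair_mem_coeffSubring (Subring.zero_mem _) (X_mem_coeffSubring 1)) hqS)
    exact hFq ▸ Subring.mul_mem _ (Subring.sub_mem _ (X_mem_coeffSubring 0) hJS)
      (psSubst_mem_coeffSubring (pair_mem_coeffSubring (X_mem_coeffSubring 0) hJS) hqS)
  · have hJS : J ∈ coeffSubring S ⊤ := psSubst_mem_coeffSubring (fun _ => X_mem_coeffSubring 1)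
      (hF.formalInverse_mem_coeffSubring hι0 hι hFS)
    refine mem_coeffSubring_of_X_sub_X_mul_mem zero_ne_one (hq ▸ ?_)
    exact psSubst_mem_coeffSubring (pair_mem_coeffSubring (X_mem_coeffSubring 0) hJS) hFS

theorem stmt2 (F : MvPowerSeries (Fin 2) k) (hF : IsFormalGroupLaw F)
    (ι : PowerSeries k) (hι0 : PowerSeries.constantCoeff ι = 0)
    (hι : psSubst ![PowerSeries.X, ι] F = 0)
    (q : MvPowerSeries (Fin 2) k)
    (hq : formalDiff F ι = ((X 0 : MvPowerSeries (Fin 2) k) - X 1) * q) :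
    -- `[-1]y = −y·q(0,y)` (as elements of `k⟦x,y⟧`, with `[-1]y` substituted in the variable `y`)
    psSubst (fun _ : Unit => (X 1 : MvPowerSeries (Fin 2) k)) ι =
      -(X 1 : MvPowerSeries (Fin 2) k) * psSubst ![0, X 1] q ∧
    -- `F(x,y) = (x − [-1]y)·q(x, [-1]y)`
    F = ((X 0 : MvPowerSeries (Fin 2) k) -
          psSubst (fun _ : Unit => (X 1 : MvPowerSeries (Fin 2) k)) ι) *
        psSubst ![X 0, psSubst (fun _ : Unit => (X 1 : MvPowerSeries (Fin 2) k)) ι] q ∧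
    -- the coefficients of `q` generate the same subring of `k` as the coefficients of `F`
    Subring.closure (Set.range fun d : Fin 2 →₀ ℕ => MvPowerSeries.coeff d q) =
      Subring.closure (Set.range fun d : Fin 2 →₀ ℕ => MvPowerSeries.coeff d F) :=
  stmt2_general F ⟨hF.2.1, hF.2.2.1, hF.2.2.2⟩ ι hι0 hι q hq
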